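/- Let m ≥ 18 be an even integer and let θ₂ be the unique root of f_m in the interval (−1/2, 0). Then the continued fraction expansion of θ₂ begins as follows (where [·] in the final listed entry denotes the integer part, and the expansion continues beyond the listed partial quotients): [−1; 1, m+1, m/2, 1, 3, (m−14)/14, 1, 6, [m/6], …] if m ≡ 0 (mod 14) and m ≥ 28; [−1; 1, m+1, m/2, 1, 3, (m−2)/14, [(49m+72)/6], …] if m ≡ 2 (mod 14) and m ≥ 156; [−1; 1, m+1, m/2, 1, 3, (m−4)/14, 6, 1, [(m−4)/6], …] if m ≡ 4 (mod 14) and m ≥ 18; [−1; 1, m+1, m/2, 1, 3, (m−6)/14, 3, 2, [(m−2)/6], …] if m ≡ 6 (mod 14) and m ≥ 20; [−1; 1, m+1, m/2, 1, 3, (m−8)/14, 2, 3, [(m−2)/6], …] if m ≡ 8 (mod 14) and m ≥ 22; [−1; 1, m+1, m/2, 1, 3, (m−10)/14, 1, 1, 2, 1, [(m−4)/6], …] if m ≡ 10 (mod 14) and m ≥ 24; [−1; 1, m+1, m/2, 1, 3, (m−12)/14, 1, 2, 1, 1, [(m−2)/6], …] if m ≡ 12 (mod 14) and m ≥ 68.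 -/

import Mathlib

/-- The regular continued fraction expansion of `θ` begins `[a₀; a₁, a₂, …]` with the listed
partial quotients `as`, and continues beyond them. -/
def cfBegins (θ : ℝ) (a₀ : ℤ) (as : List ℤ) : Prop :=
  ⌊θ⌋ = a₀ ∧
  (∀ i : ℕ, ∀ h : i < as.length,
    (GenContFract.of θ).partDens.get? i = some ((as.get ⟨i, h⟩ : ℤ) : ℝ)) ∧
  ((GenContFract.of θ).partDens.get? as.length).isSome

/-!
The root `θ` in `(-1, 0)` is `-1 / (1 + ρ)`, where `ρ` is the only positive root of `f_m`. Write
`ρ = [m + 1; m / 2, 1, 3, (m - 2) / 14 + 6 / w]` with a real parameter `w`. The signs of `f_m`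
along this family give `49 a / 2 < w < 49 a / 2 + 168 / a` with `a = 2 m + 3`, whatever the class of
`m` modulo `14`. If `m = 14 j + 2 + 2 s`, the complete quotient `(m - 2) / 14 + 6 / w` is
`j + s / 7 + 6 / w`. For `s = 0` the next complete quotient is `w / 6`. For `1 ≤ s ≤ 6` the
expansion of `s / 7` of even length, with last two denominators `q` and `7`, is followed by the
complete quotient `x` such that `w = 294 x + 42 q`, because `(p x + p') / (7 x + q) - p / 7` equals
`1 / (7 (7 x + q))`.
-/

theorem partDens_get?_zero {x : ℝ} (hx : Int.fract x ≠ 0) :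
    (GenContFract.of x).partDens.get? 0 = some (⌊(Int.fract x)⁻¹⌋ : ℝ) := by
  have hhead : (GenContFract.of x).s.get? 0 = some ⟨1, ⌊(Int.fract x)⁻¹⌋⟩ :=
    GenContFract.of_s_head hx
  simp only [GenContFract.partDens, Stream'.Seq.map_get?, hhead, Option.map_some]

theorem partDens_get?_succ (x : ℝ) (n : ℕ) :
    (GenContFract.of x).partDens.get? (n + 1) =
      (GenContFract.of (Int.fract x)⁻¹).partDens.get? n := by
  simp only [GenContFract.partDens, Stream'.Seq.map_get?, GenContFract.of_s_succ]

namespace cfBegins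

theorem nil {x : ℝ} (hx : Int.fract x ≠ 0) : cfBegins x ⌊x⌋ [] := by
  refine ⟨rfl, fun i hi => absurd hi i.not_lt_zero, ?_⟩
  rw [List.length_nil, partDens_get?_zero hx, Option.isSome_some]

theorem nil_of_ediv {x : ℝ} {N K n : ℤ} (hn : 0 < n) (hlo : (N : ℝ) < n * x)
    (hhi : n * x < N + K) (hK : N % n + K ≤ n) : cfBegins x (N / n) [] := by
  have hn' : (0 : ℝ) < n := by exact_mod_cast hn
  have hdiv : ((N % n : ℤ) : ℝ) + n * (N / n : ℤ) = N := by exact_mod_cast Int.emod_add_mul_ediv N n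
  have hmod : (0 : ℝ) ≤ (N % n : ℤ) := by exact_mod_cast Int.emod_nonneg N hn.ne'
  have hK' : ((N % n : ℤ) : ℝ) + K ≤ n := by exact_mod_cast hK
  have hlt : ((N / n : ℤ) : ℝ) < x := by nlinarith
  have hfloor : ⌊x⌋ = N / n := Int.floor_eq_iff.2 ⟨hlt.le, by nlinarith⟩
  have hfract : Int.fract x ≠ 0 := by
    rw [Int.fract, hfloor]
    exact (sub_pos.2 hlt).ne'
  exact hfloor ▸ nil hfract

theorem cons {y : ℝ} {b : ℤ} {bs : List ℤ} (a : ℤ) (hy : 1 < y) (h : cfBegins y b bs) :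
    cfBegins (a + y⁻¹) a (b :: bs) := by
  have hy0 : 0 < y⁻¹ := inv_pos.2 (zero_lt_one.trans hy)
  have hfloor : ⌊a + y⁻¹⌋ = a := by
    rw [Int.floor_intCast_add, Int.floor_eq_zero_iff.2 ⟨hy0.le, inv_lt_one_of_one_lt₀ hy⟩, add_zero]
  have hfract : Int.fract (a + y⁻¹) = y⁻¹ := by rw [Int.fract, hfloor, add_sub_cancel_left]
  have htail (n : ℕ) : (GenContFract.of (a + y⁻¹)).partDens.get? (n + 1) =
      (GenContFract.of y).partDens.get? n := by
    rw [partDens_get?_succ, hfract, inv_inv]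
  refine ⟨hfloor, ?_, ?_⟩
  · rintro (_ | i) hi
    · rw [partDens_get?_zero (hfract.trans_ne hy0.ne'), hfract, inv_inv, h.1]
      rfl
    · rw [htail]
      exact h.2.1 i (Nat.lt_of_succ_lt_succ hi)
  · rw [List.length_cons, htail]
    exact h.2.2

end cfBegins

/-- The finite continued fraction `[a₁; …, aₙ, y]` with integer partial quotients `as` and a real
last entry `y`; a number of this form with `1 < y` has `y` as its complete quotient. -/
noncomputable def cfEval (as : List ℤ) (y : ℝ) : ℝ := as.foldr (fun (a : ℤ) (z : ℝ) => a + z⁻¹) y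

theorem cfEval_append (as bs : List ℤ) (y : ℝ) :
    cfEval (as ++ bs) y = cfEval as (cfEval bs y) := by
  simp only [cfEval, List.foldr_append]

theorem one_lt_cfEval {as : List ℤ} {y : ℝ} (has : ∀ a ∈ as, 1 ≤ a) (hy : 1 < y) :
    1 < cfEval as y := by
  induction as with
  | nil => exact hy
  | cons a as ih =>
    obtain ⟨ha, has⟩ := List.forall_mem_cons.1 has
    have ha' : (1 : ℝ) ≤ a := by exact_mod_cast ha
    have hinv : 0 < (cfEval as y)⁻¹ := inv_pos.2 (zero_lt_one.trans (ih has))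
    exact lt_add_of_le_of_pos ha' hinv

theorem cfBegins.add_inv_cfEval {as : List ℤ} {y : ℝ} {b : ℤ} {bs : List ℤ} (a : ℤ)
    (has : ∀ a ∈ as, 1 ≤ a) (hy : 1 < y) (h : cfBegins y b bs) :
    cfBegins (a + (cfEval as y)⁻¹) a (as ++ b :: bs) := by
  induction as generalizing a with
  | nil => exact h.cons a hy
  | cons c as ih => exact (ih c (List.forall_mem_cons.1 has).2).cons a (one_lt_cfEval has hy)

/-- The simplest cubic polynomial `f_m`, with a real parameter `m`, as a function. -/
def simplestCubic (m x : ℝ) : ℝ := x ^ 3 - m * x ^ 2 - (m + 3) * x - 1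

section PositiveRoot

variable {m x y : ℝ}

-- `x ↦ -1 / (1 + x)` permutes the three roots of `f_m` cyclically.
theorem simplestCubic_neg_inv_one_add (hx : 1 + x ≠ 0) :
    simplestCubic m (-(1 + x)⁻¹) = -simplestCubic m x / (1 + x) ^ 3 := by
  simp only [simplestCubic]
  field_simp
  ring

-- On the positive axis `f_m x = 0` means `m = (x³ - 3 x - 1) / (x² + x)`, which increases with `x`:
-- its derivative is `(x² + x + 1)² / (x² + x)²`.
theorem simplestCubic_pos_of_lt (hx : 0 < x) (hxy : x < y) (h : simplestCubic m x = 0) :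
    0 < simplestCubic m y := by
  have hy : 0 < y := hx.trans hxy
  have hcross : (x ^ 2 + x) * simplestCubic m y = (y ^ 2 + y) * simplestCubic m x +
      (y - x) * (x ^ 2 * y ^ 2 + x * y * (x + y) + 3 * (x * y) + x + y + 1) := by
    simp only [simplestCubic]
    ring
  have hprod : 0 < (x ^ 2 + x) * simplestCubic m y := by
    rw [hcross, h, mul_zero, zero_add]
    exact mul_pos (sub_pos.2 hxy) (by positivity)
  exact pos_of_mul_pos_right hprod (by positivity)

theorem simplestCubic_pos_root_unique (hx : 0 < x) (hy : 0 < y) (hfx : simplestCubic m x = 0)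
    (hfy : simplestCubic m y = 0) : x = y := by
  rcases lt_trichotomy x y with hlt | heq | hgt
  · exact absurd hfy (simplestCubic_pos_of_lt hx hlt hfx).ne'
  · exact heq
  · exact absurd hfx (simplestCubic_pos_of_lt hy hgt hfy).ne'

end PositiveRoot

/-- The finite continued fraction `[m + 1; m / 2, 1, 3, (m - 2) / 14 + 6 / w]` in closed form. It
parametrizes the candidates for the positive root of `f_m`. -/
noncomputable def rootCandidate (m w : ℝ) : ℝ :=
  m + 1 + ((2 * m + 3) * w + 168) / ((m ^ 2 + 3 * m + 4) * w + 42 * (2 * m + 3))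

section RootCandidate

variable {m : ℝ}

theorem rootCandidate_pos {w : ℝ} (hm : 0 < m) (hw : 0 < w) : 0 < rootCandidate m w := by
  unfold rootCandidate
  positivity

theorem simplestCubic_rootCandidate_lower_pos (hm : 0 < m) :
    0 < simplestCubic m (rootCandidate m (49 * (2 * m + 3) / 2)) := by
  obtain ⟨a, ha, rfl⟩ : ∃ a, 0 < a ∧ m = (a - 3) / 2 := ⟨2 * m + 3, by positivity, by ring⟩
  have hcand : rootCandidate ((a - 3) / 2) (49 * (2 * ((a - 3) / 2) + 3) / 2) =
      (a - 1) / 2 + 4 * (7 * a ^ 2 + 48) / (a * (7 * a ^ 2 + 97)) := by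
    rw [rootCandidate, show 2 * ((a - 3) / 2) + 3 = a by ring,
      show ((a - 3) / 2) ^ 2 + 3 * ((a - 3) / 2) + 4 = (a ^ 2 + 7) / 4 by ring]
    have : (a ^ 2 + 7) / 4 * (49 * a / 2) + 42 * a ≠ 0 := by positivity
    field_simp
    ring
  have hval : simplestCubic ((a - 3) / 2)
      ((a - 1) / 2 + 4 * (7 * a ^ 2 + 48) / (a * (7 * a ^ 2 + 97))) =
      16 * (7007 * a ^ 4 + 162981 * a ^ 2 + 442368) / (a * (7 * a ^ 2 + 97)) ^ 3 := by
    rw [simplestCubic]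
    field_simp
    ring
  rw [hcand, hval]
  positivity

theorem simplestCubic_rootCandidate_upper_neg (hm : 0 < m) :
    simplestCubic m (rootCandidate m (49 * (2 * m + 3) / 2 + 168 / (2 * m + 3))) < 0 := by
  obtain ⟨a, ha, rfl⟩ : ∃ a, 0 < a ∧ m = (a - 3) / 2 := ⟨2 * m + 3, by positivity, by ring⟩
  have hcand : rootCandidate ((a - 3) / 2)
      (49 * (2 * ((a - 3) / 2) + 3) / 2 + 168 / (2 * ((a - 3) / 2) + 3)) =
      (a - 1) / 2 + 4 * a * (7 * a ^ 2 + 96) / (7 * a ^ 4 + 145 * a ^ 2 + 336) := by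
    rw [rootCandidate, show 2 * ((a - 3) / 2) + 3 = a by ring,
      show ((a - 3) / 2) ^ 2 + 3 * ((a - 3) / 2) + 4 = (a ^ 2 + 7) / 4 by ring]
    have : (a ^ 2 + 7) / 4 * (49 * a / 2 + 168 / a) + 42 * a ≠ 0 := by positivity
    field_simp
    ring
  have hval : simplestCubic ((a - 3) / 2)
      ((a - 1) / 2 + 4 * a * (7 * a ^ 2 + 96) / (7 * a ^ 4 + 145 * a ^ 2 + 336)) =
      -(16 * a * (49 * a ^ 6 + 49707 * a ^ 4 + 1462752 * a ^ 2 + 8467200) /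
        (7 * a ^ 4 + 145 * a ^ 2 + 336) ^ 3) := by
    rw [simplestCubic]
    field_simp
    ring
  rw [hcand, hval, neg_lt_zero]
  positivity

theorem exists_rootCandidate_eq_zero (hm : 0 < m) :
    ∃ w, 49 * (2 * m + 3) / 2 < w ∧ w < 49 * (2 * m + 3) / 2 + 168 / (2 * m + 3) ∧
      simplestCubic m (rootCandidate m w) = 0 := by
  have hle : 49 * (2 * m + 3) / 2 ≤ 49 * (2 * m + 3) / 2 + 168 / (2 * m + 3) :=
    le_add_of_nonneg_right (by positivity)
  have hcont : ContinuousOn (fun w => simplestCubic m (rootCandidate m w))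
      (Set.Icc (49 * (2 * m + 3) / 2) (49 * (2 * m + 3) / 2 + 168 / (2 * m + 3))) := by
    have hden : ∀ w ∈ Set.Icc (49 * (2 * m + 3) / 2)
        (49 * (2 * m + 3) / 2 + 168 / (2 * m + 3)),
        (m ^ 2 + 3 * m + 4) * w + 42 * (2 * m + 3) ≠ 0 := fun w hw => by
      have hw0 : 0 < w := lt_of_lt_of_le (by positivity) hw.1
      positivity
    unfold simplestCubic rootCandidate
    fun_prop (disch := assumption)
  obtain ⟨w, ⟨hlo, hhi⟩, hw⟩ := intermediate_value_Ioo' hle hcont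
    ⟨simplestCubic_rootCandidate_upper_neg hm, simplestCubic_rootCandidate_lower_pos hm⟩
  exact ⟨w, hlo, hhi, hw⟩

theorem exists_eq_neg_inv_one_add_rootCandidate {θ : ℝ} (hm : 0 < m) (hroot : simplestCubic m θ = 0)
    (hθl : -1 < θ) (hθr : θ < 0) :
    ∃ w, 49 * (2 * m + 3) / 2 < w ∧ w < 49 * (2 * m + 3) / 2 + 168 / (2 * m + 3) ∧
      θ = -(1 + rootCandidate m w)⁻¹ := by
  obtain ⟨w, hlo, hhi, hw⟩ := exists_rootCandidate_eq_zero hm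
  have hw0 : 0 < w := lt_trans (by positivity) hlo
  obtain ⟨ρ, rfl⟩ : ∃ ρ, θ = -(1 + ρ)⁻¹ := ⟨-θ⁻¹ - 1, by simp⟩
  have hρ1 : 0 < 1 + ρ := inv_pos.1 (neg_lt_zero.1 hθr)
  have hρ : 0 < ρ := by
    have := (inv_lt_one₀ hρ1).1 (neg_lt_neg_iff.1 hθl)
    linarith
  have hfρ : simplestCubic m ρ = 0 := by
    rw [simplestCubic_neg_inv_one_add hρ1.ne'] at hroot
    simpa [hρ1.ne'] using hroot
  rw [simplestCubic_pos_root_unique hρ (rootCandidate_pos hm hw0) hfρ hw]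
  exact ⟨w, hlo, hhi, rfl⟩

end RootCandidate

theorem neg_inv_one_add {x : ℝ} (hx : 0 < x) : -(1 + x)⁻¹ = -1 + (1 + x⁻¹)⁻¹ := by
  field_simp
  ring

theorem rootCandidate_eq_cfEval {m : ℤ} {w : ℝ} (hm : 0 < m) (heven : Even m) (hw : 0 < w) :
    rootCandidate m w = cfEval [m + 1, m / 2, 1, 3] ((m - 2) / 14 + 6 / w) := by
  obtain ⟨k, rfl⟩ := heven.two_dvd
  have hk : (1 : ℝ) ≤ k := by exact_mod_cast (by omega : 1 ≤ k)
  obtain ⟨φ, hφ⟩ : ∃ φ, φ = (((2 * k : ℤ) : ℝ) - 2) / 14 + 6 / w := ⟨_, rfl⟩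
  have hφw : 7 * (w * φ) = (k - 1) * w + 42 := by
    rw [hφ]
    push_cast
    field_simp
    ring
  have hφ0 : 0 < φ := by
    have : 0 < w * φ := by nlinarith
    exact pos_of_mul_pos_right this hw.le
  have hfold : cfEval [2 * k + 1, k, 1, 3] φ =
      2 * k + 1 + (4 * φ + 1) / ((4 * k + 3) * φ + k + 1) := by
    simp only [cfEval, List.foldr_cons, List.foldr_nil]
    push_cast
    field_simp
    ring
  rw [Int.mul_ediv_cancel_left k two_ne_zero, ← hφ, hfold, rootCandidate]
  push_cast
  rw [add_right_inj, div_eq_div_iff (by positivity) (by positivity)]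
  linear_combination -hφw

theorem exists_eq_cfEval {m : ℤ} {θ : ℝ} (hm : 0 < m) (heven : Even m)
    (hroot : simplestCubic m θ = 0) (hθl : -1 < θ) (hθr : θ < 0) :
    ∃ w : ℝ, 49 * (2 * m + 3) / 2 < w ∧ w < 49 * (2 * m + 3) / 2 + 168 / (2 * m + 3) ∧
      θ = (-1 : ℤ) + (cfEval [1, m + 1, m / 2, 1, 3] ((m - 2) / 14 + 6 / w))⁻¹ := by
  have hm0 : (0 : ℝ) < m := by exact_mod_cast hm
  obtain ⟨w, hlo, hhi, hθ⟩ := exists_eq_neg_inv_one_add_rootCandidate hm0 hroot hθl hθr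
  have hw0 : 0 < w := lt_trans (by positivity) hlo
  refine ⟨w, hlo, hhi, ?_⟩
  rw [hθ, neg_inv_one_add (rootCandidate_pos hm0 hw0), rootCandidate_eq_cfEval hm heven hw0]
  simp only [cfEval, List.foldr_cons, Int.cast_neg, Int.cast_one]

theorem cfBegins_of_eq_cfEval {m : ℤ} {θ φ x : ℝ} {as : List ℤ} {b : ℤ} (hm : 2 ≤ m)
    (hθ : θ = (-1 : ℤ) + (cfEval [1, m + 1, m / 2, 1, 3] φ)⁻¹) (hφ : φ = cfEval as x)
    (has : ∀ a ∈ as, 1 ≤ a) (hx : 1 < x) (hb : cfBegins x b []) :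
    cfBegins θ (-1) ([1, m + 1, m / 2, 1, 3] ++ as ++ [b]) := by
  rw [hθ, hφ, ← cfEval_append]
  refine hb.add_inv_cfEval (-1) ?_ hx
  simp only [List.forall_mem_append, List.forall_mem_cons]
  exact ⟨⟨by omega, by omega, by omega, by omega, by omega, by simp⟩, has⟩

theorem cfBegins_of_two_mod_fourteen {m : ℤ} {θ : ℝ} (hm : 18 ≤ m) (hmod : m % 14 = 2)
    (hlarge : m % 6 = 4 → 156 ≤ m) (hroot : simplestCubic m θ = 0) (hθl : -1 < θ) (hθr : θ < 0) :
    cfBegins θ (-1) [1, m + 1, m / 2, 1, 3, (m - 2) / 14, (49 * m + 72) / 6] := by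
  obtain ⟨w, hlo, hhi, hθ⟩ := exists_eq_cfEval (by omega) (Int.even_iff.2 (by omega)) hroot hθl hθr
  -- `49 m + 72 + K` is the first multiple of `6` above `49 m + 72`.
  obtain ⟨K, hK⟩ : ∃ K, K = 6 - (49 * m + 72) % 6 := ⟨_, rfl⟩
  have hm' : (18 : ℝ) ≤ m := by exact_mod_cast hm
  have hgap : (168 : ℝ) / (2 * m + 3) ≤ K - 3 / 2 := by
    have hcases : K = 2 ∧ 170 ≤ m ∨ K = 4 ∧ 44 ≤ m ∨ K = 6 := by omega
    rw [div_le_iff₀ (by linarith)]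
    rcases hcases with ⟨rfl, h⟩ | ⟨rfl, h⟩ | rfl
    · have h' : (170 : ℝ) ≤ m := by exact_mod_cast h
      push_cast
      linarith
    · have h' : (44 : ℝ) ≤ m := by exact_mod_cast h
      push_cast
      linarith
    · push_cast
      linarith
  have hj : (m : ℝ) = 14 * ((m - 2) / 14 : ℤ) + 2 := by
    exact_mod_cast (by omega : m = 14 * ((m - 2) / 14) + 2)
  have hφ : ((m : ℝ) - 2) / 14 + 6 / w = cfEval [(m - 2) / 14] (w / 6) := by
    simp only [cfEval, List.foldr_cons, List.foldr_nil, inv_div]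
    linarith
  refine cfBegins_of_eq_cfEval (by omega) hθ hφ (by simpa using by omega) (by linarith) ?_
  refine cfBegins.nil_of_ediv (K := K) (by norm_num) ?_ ?_ (by omega)
  · push_cast
    linarith
  · push_cast
    linarith

-- Since `49 m + 73 < w < 49 m + 78` and `w = 294 x + 42 q`, the bounds on `N` give `N < 6 x < N + 2`.
theorem cfBegins_of_inv_cfEval {m j s q N : ℤ} {cs : List ℤ} {θ : ℝ} (hm : 18 ≤ m)
    (hmj : m = 14 * j + 2 + 2 * s) (hj : 1 ≤ j) (hcs : ∀ c ∈ cs, 1 ≤ c)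
    (heval : ∀ x : ℝ, 0 < x → (cfEval cs x)⁻¹ = s / 7 + 6 / (294 * x + 42 * q))
    (hN : 6 ≤ N) (hNeven : N % 2 = 0)
    (hlo : 49 * N + 42 * q ≤ 49 * m + 73) (hhi : 49 * m + 78 ≤ 49 * (N + 2) + 42 * q)
    (hroot : simplestCubic m θ = 0) (hθl : -1 < θ) (hθr : θ < 0) :
    cfBegins θ (-1) ([1, m + 1, m / 2, 1, 3] ++ j :: cs ++ [N / 6]) := by
  obtain ⟨w, hwlo, hwhi, hθ⟩ :=
    exists_eq_cfEval (by omega) ⟨7 * j + 1 + s, by omega⟩ hroot hθl hθr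
  obtain ⟨x, rfl⟩ : ∃ x, w = 294 * x + 42 * q := ⟨(w - 42 * q) / 294, by ring⟩
  have hm' : (18 : ℝ) ≤ m := by exact_mod_cast hm
  have hgap : (168 : ℝ) / (2 * m + 3) ≤ 9 / 2 := by
    rw [div_le_iff₀ (by linarith)]
    linarith
  have hNx : (N : ℝ) < 6 * x := by
    have : (49 * N + 42 * q : ℝ) ≤ 49 * m + 73 := by exact_mod_cast hlo
    linarith
  have hxN : 6 * x < N + 2 := by
    have : (49 * m + 78 : ℝ) ≤ 49 * (N + 2) + 42 * q := by exact_mod_cast hhi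
    linarith
  have hx : 1 < x := by
    have : (6 : ℝ) ≤ N := by exact_mod_cast hN
    linarith
  have hφ : ((m : ℝ) - 2) / 14 + 6 / (294 * x + 42 * q) = cfEval (j :: cs) x := by
    have hmj' : (m : ℝ) = 14 * j + 2 + 2 * s := by exact_mod_cast hmj
    have hcons : cfEval (j :: cs) x = j + (cfEval cs x)⁻¹ := rfl
    rw [hcons, heval x (by linarith), hmj']
    ring
  refine cfBegins_of_eq_cfEval (by omega) hθ hφ (List.forall_mem_cons.2 ⟨hj, hcs⟩) hx ?_
  refine cfBegins.nil_of_ediv (K := 2) (by norm_num) (by exact_mod_cast hNx)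
    (by exact_mod_cast hxN) (by omega)

section SeventhExpansions

variable {x : ℝ}

theorem inv_cfEval_six_one (hx : 0 < x) :
    (cfEval [6, 1] x)⁻¹ = 1 / 7 + 6 / (294 * x + 42 * 6) := by
  simp only [cfEval, List.foldr_cons, List.foldr_nil]
  push_cast
  field_simp
  ring

theorem inv_cfEval_three_two (hx : 0 < x) :
    (cfEval [3, 2] x)⁻¹ = 2 / 7 + 6 / (294 * x + 42 * 3) := by
  simp only [cfEval, List.foldr_cons, List.foldr_nil]
  push_cast
  field_simp
  ring

theorem inv_cfEval_two_three (hx : 0 < x) :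
    (cfEval [2, 3] x)⁻¹ = 3 / 7 + 6 / (294 * x + 42 * 2) := by
  simp only [cfEval, List.foldr_cons, List.foldr_nil]
  push_cast
  field_simp
  ring

theorem inv_cfEval_one_one_two_one (hx : 0 < x) :
    (cfEval [1, 1, 2, 1] x)⁻¹ = 4 / 7 + 6 / (294 * x + 42 * 5) := by
  simp only [cfEval, List.foldr_cons, List.foldr_nil]
  push_cast
  field_simp
  ring

theorem inv_cfEval_one_two_one_one (hx : 0 < x) :
    (cfEval [1, 2, 1, 1] x)⁻¹ = 5 / 7 + 6 / (294 * x + 42 * 4) := by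
  simp only [cfEval, List.foldr_cons, List.foldr_nil]
  push_cast
  field_simp
  ring

theorem inv_cfEval_one_six (hx : 0 < x) :
    (cfEval [1, 6] x)⁻¹ = 6 / 7 + 6 / (294 * x + 42 * 1) := by
  simp only [cfEval, List.foldr_cons, List.foldr_nil]
  push_cast
  field_simp
  ring

end SeventhExpansions

theorem stmt10_general (m : ℤ) (hm : 18 ≤ m) (θ : ℝ) (hroot : simplestCubic m θ = 0)
    (hθl : -1 < θ) (hθr : θ < 0) :
    (m % 14 = 0 →
      cfBegins θ (-1) [1, m + 1, m / 2, 1, 3, (m - 14) / 14, 1, 6, m / 6]) ∧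
    (m % 14 = 2 → (m % 6 = 4 → 156 ≤ m) →
      cfBegins θ (-1) [1, m + 1, m / 2, 1, 3, (m - 2) / 14, (49 * m + 72) / 6]) ∧
    (m % 14 = 4 →
      cfBegins θ (-1) [1, m + 1, m / 2, 1, 3, (m - 4) / 14, 6, 1, (m - 4) / 6]) ∧
    (m % 14 = 6 →
      cfBegins θ (-1) [1, m + 1, m / 2, 1, 3, (m - 6) / 14, 3, 2, (m - 2) / 6]) ∧
    (m % 14 = 8 →
      cfBegins θ (-1) [1, m + 1, m / 2, 1, 3, (m - 8) / 14, 2, 3, (m - 2) / 6]) ∧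
    (m % 14 = 10 →
      cfBegins θ (-1) [1, m + 1, m / 2, 1, 3, (m - 10) / 14, 1, 1, 2, 1, (m - 4) / 6]) ∧
    (m % 14 = 12 →
      cfBegins θ (-1) [1, m + 1, m / 2, 1, 3, (m - 12) / 14, 1, 2, 1, 1, (m - 2) / 6]) := by
  have eval_case {j N : ℤ} (cs : List ℤ) (s q : ℤ) (hcs : ∀ c ∈ cs, 1 ≤ c)
      (heval : ∀ x : ℝ, 0 < x → (cfEval cs x)⁻¹ = s / 7 + 6 / (294 * x + 42 * q))
      (harith : m = 14 * j + 2 + 2 * s ∧ 1 ≤ j ∧ 6 ≤ N ∧ N % 2 = 0 ∧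
        49 * N + 42 * q ≤ 49 * m + 73 ∧ 49 * m + 78 ≤ 49 * (N + 2) + 42 * q) :
      cfBegins θ (-1) ([1, m + 1, m / 2, 1, 3] ++ j :: cs ++ [N / 6]) := by
    obtain ⟨hmj, hj, hN, hNeven, hlo, hhi⟩ := harith
    exact cfBegins_of_inv_cfEval hm hmj hj hcs heval hN hNeven hlo hhi hroot hθl hθr
  refine ⟨fun h => ?_, fun h hlarge => ?_, fun h => ?_, fun h => ?_, fun h => ?_, fun h => ?_,
    fun h => ?_⟩
  · exact eval_case [1, 6] 6 1 (by decide)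
      (fun x hx => by push_cast; exact inv_cfEval_one_six hx) (by omega)
  · exact cfBegins_of_two_mod_fourteen hm h hlarge hroot hθl hθr
  · exact eval_case [6, 1] 1 6 (by decide)
      (fun x hx => by push_cast; exact inv_cfEval_six_one hx) (by omega)
  · exact eval_case [3, 2] 2 3 (by decide)
      (fun x hx => by push_cast; exact inv_cfEval_three_two hx) (by omega)
  · exact eval_case [2, 3] 3 2 (by decide)
      (fun x hx => by push_cast; exact inv_cfEval_two_three hx) (by omega)
  · exact eval_case [1, 1, 2, 1] 4 5 (by decide)
      (fun x hx => by push_cast; exact inv_cfEval_one_one_two_one hx) (by omega)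
  · exact eval_case [1, 2, 1, 1] 5 4 (by decide)
      (fun x hx => by push_cast; exact inv_cfEval_one_two_one_one hx) (by omega)

theorem stmt10 (m : ℤ) (hm : 18 ≤ m) (heven : Even m) (θ : ℝ)
    (hroot : θ ^ 3 - (m : ℝ) * θ ^ 2 - ((m : ℝ) + 3) * θ - 1 = 0)
    (hθl : -(1 / 2) < θ) (hθr : θ < 0) :
    (m % 14 = 0 → 28 ≤ m →
      cfBegins θ (-1) [1, m + 1, m / 2, 1, 3, (m - 14) / 14, 1, 6, m / 6]) ∧
    (m % 14 = 2 → 156 ≤ m →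
      cfBegins θ (-1) [1, m + 1, m / 2, 1, 3, (m - 2) / 14, (49 * m + 72) / 6]) ∧
    (m % 14 = 4 → 18 ≤ m →
      cfBegins θ (-1) [1, m + 1, m / 2, 1, 3, (m - 4) / 14, 6, 1, (m - 4) / 6]) ∧
    (m % 14 = 6 → 20 ≤ m →
      cfBegins θ (-1) [1, m + 1, m / 2, 1, 3, (m - 6) / 14, 3, 2, (m - 2) / 6]) ∧
    (m % 14 = 8 → 22 ≤ m →
      cfBegins θ (-1) [1, m + 1, m / 2, 1, 3, (m - 8) / 14, 2, 3, (m - 2) / 6]) ∧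
    (m % 14 = 10 → 24 ≤ m →
      cfBegins θ (-1) [1, m + 1, m / 2, 1, 3, (m - 10) / 14, 1, 1, 2, 1, (m - 4) / 6]) ∧
    (m % 14 = 12 → 68 ≤ m →
      cfBegins θ (-1) [1, m + 1, m / 2, 1, 3, (m - 12) / 14, 1, 2, 1, 1, (m - 2) / 6]) := by
  obtain ⟨h0, h2, h4, h6, h8, h10, h12⟩ := stmt10_general m hm θ hroot (by linarith) hθr
  exact ⟨fun h _ => h0 h, fun h hm' => h2 h fun _ => hm', fun h _ => h4 h, fun h _ => h6 h,
    fun h _ => h8 h, fun h _ => h10 h, fun h _ => h12 h⟩
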